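/- Let D be a positive integer, let a be an integer with gcd(a,D)=1, and let χ be a Dirichlet character (mod D). Then Σ_{b=0}^{D-1} conj(χ(b))·e(-ab/D) = μ(D/f_χ) · χ*(a) · conj(χ*(D/f_χ)) · conj(τ(χ*)). -/

import Mathlib

/-!
Complex conjugation and the substitution `b ↦ a⁻¹ b` reduce the claim to
`τ(χ) = μ(D/f) ψ(D/f) τ(ψ)`, where `ψ` of level `f` induces `χ`. Detecting coprimality to `D` by
`∑_{d ∣ (x, D)} μ(d)` gives `τ(χ) = ∑_{d ∣ D} μ(d) S(d)`, where `S(d)` is the sum of `ψ(x) e(x/D)`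
over `x mod D` with `d ∣ x`. The shift `x ↦ x + d f` multiplies `S(d)` by `e(df/D)`, so `S(d) = 0`
unless `D/f ∣ d`; and if `d = (D/f) k` with `k ≠ 1`, then `k` divides both `f` and every `x` in the
sum, so each `ψ(x)` vanishes. Only `d = D/f` remains, and `S(D/f) = ψ(D/f) τ(ψ)`.
-/

/-- `e x = exp(2πix)`. -/
noncomputable def e (x : ℝ) : ℂ := Complex.exp (2 * Real.pi * Complex.I * x)

/-- The Gauss sum `τ(ψ) = ∑_{b mod N} ψ(b) e(b/N)` of a Dirichlet character `ψ (mod N)`. -/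
noncomputable def gaussSumOf {N : ℕ} (ψ : DirichletCharacter ℂ N) : ℂ :=
  ∑ b ∈ Finset.range N, ψ (b : ZMod N) * e ((b : ℝ) / N)

open Finset DirichletCharacter
open scoped ArithmeticFunction.Moebius ComplexConjugate

section SumsOverResidues

variable {M : Type*} [AddCommMonoid M]

lemma sum_range_natCast_zmod {n : ℕ} [NeZero n] (F : ZMod n → M) :
    ∑ b ∈ range n, F b = ∑ x, F x :=
  sum_bij' (fun b _ ↦ (b : ZMod n)) (fun x _ ↦ x.val) (by simp)
    (fun x _ ↦ mem_range.2 x.val_lt) (fun _ hb ↦ ZMod.val_cast_of_lt (mem_range.1 hb))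
    (by simp) (by simp)

lemma sum_filter_dvd_val {m n : ℕ} [NeZero n] [NeZero (n * m)] (F : ZMod (n * m) → M) :
    ∑ x with m ∣ x.val, F x = ∑ y : ZMod n, F ((m * y.val : ℕ) : ZMod (n * m)) := by
  have hm : 0 < m := Nat.pos_of_mul_pos_left (NeZero.pos (n * m))
  have val_mul (y : ZMod n) : ((m * y.val : ℕ) : ZMod (n * m)).val = m * y.val :=
    ZMod.val_cast_of_lt (by rw [mul_comm]; exact Nat.mul_lt_mul_of_pos_right y.val_lt hm)
  symm
  refine sum_bij (fun y _ ↦ ((m * y.val : ℕ) : ZMod (n * m))) ?_ ?_ ?_ fun _ _ ↦ rfl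
  · intro y _
    simp only [mem_filter, mem_univ, true_and, val_mul, dvd_mul_right]
  · intro y _ y' _ h
    have h := congrArg ZMod.val h
    rw [val_mul, val_mul] at h
    exact ZMod.val_injective n (Nat.eq_of_mul_eq_mul_left hm h)
  · intro x hx
    obtain ⟨c, hc⟩ := (mem_filter.1 hx).2
    have hcn : c < n :=
      Nat.lt_of_mul_lt_mul_left (hc.symm.trans_lt (x.val_lt.trans_eq (mul_comm n m)))
    refine ⟨(c : ZMod n), mem_univ _, ?_⟩
    simp only [ZMod.val_cast_of_lt hcn, ← hc, ZMod.natCast_zmod_val]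

end SumsOverResidues

lemma periodic_ite_dvd_val {M : Type*} [Zero M] {d f D : ℕ} [NeZero D] (hd : d ∣ D) (hfD : f ∣ D)
    (F : ZMod f → M) :
    Function.Periodic (fun x : ZMod D ↦ if d ∣ x.val then F x.cast else 0)
      ((d * f : ℕ) : ZMod D) := by
  intro x
  have dvd_iff : d ∣ (x + ((d * f : ℕ) : ZMod D)).val ↔ d ∣ x.val := by
    rw [ZMod.val_add, ZMod.val_natCast, Nat.dvd_mod_iff hd,
      Nat.dvd_add_left ((Nat.dvd_mod_iff hd).2 (dvd_mul_right d f))]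
  have cast_eq : (x + ((d * f : ℕ) : ZMod D)).cast = (x.cast : ZMod f) := by
    rw [ZMod.cast_add hfD, ZMod.cast_natCast hfD]
    simp
  simp only [dvd_iff, cast_eq]

lemma sum_mul_addChar_eq_zero_of_periodic {A R : Type*} [AddGroup A] [Fintype A] [Ring R]
    [IsDomain R] {F : A → R} {t : A} (hF : F.Periodic t) {ε : AddChar A R} (hε : ε t ≠ 1) :
    ∑ x, F x * ε x = 0 := by
  have shift : (∑ x, F x * ε x) * ε t = ∑ x, F x * ε x := by
    rw [sum_mul, ← Equiv.sum_comp (Equiv.addRight t) fun x ↦ F x * ε x]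
    simp only [Equiv.coe_addRight, hF _, AddChar.map_add_eq_mul, mul_assoc]
  exact (mul_right_eq_self₀.1 shift).resolve_left hε

lemma sum_moebius_filter_dvd {n : ℕ} (hn : n ≠ 0) (b : ℕ) :
    ∑ d ∈ n.divisors with d ∣ b, μ d = if b.Coprime n then 1 else 0 := by
  have common_divisors : n.divisors.filter (· ∣ b) = (b.gcd n).divisors := by
    ext d
    simp [Nat.dvd_gcd_iff, hn, and_comm]
  rw [common_divisors, ← ArithmeticFunction.coe_mul_zeta_apply,
    ArithmeticFunction.moebius_mul_coe_zeta, ArithmeticFunction.one_apply]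

lemma map_natCast_eq_zero_of_dvd {R : Type*} [CommMonoidWithZero R] {f : ℕ}
    (ψ : DirichletCharacter R f) {k b : ℕ} (hkf : k ∣ f) (hkb : k ∣ b) (hk : k ≠ 1) : ψ b = 0 := by
  refine ψ.map_nonunit fun hb ↦ hk ?_
  exact Nat.eq_one_of_dvd_coprimes ((ZMod.isUnit_iff_coprime b f).1 hb) hkb hkf

section ChangeLevel

variable {R : Type*} [CommRing R] {f D : ℕ} [NeZero D]

lemma changeLevel_eq_sum_moebius (hfD : f ∣ D) (ψ : DirichletCharacter R f) (x : ZMod D) :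
    changeLevel hfD ψ x = ∑ d ∈ D.divisors with d ∣ x.val, (μ d : R) * ψ x.cast := by
  rw [← sum_mul, ← Int.cast_sum, sum_moebius_filter_dvd (NeZero.ne D)]
  have isUnit_iff : IsUnit x ↔ x.val.Coprime D := by
    rw [← ZMod.isUnit_iff_coprime, ZMod.natCast_zmod_val]
  split_ifs with hx
  · simpa using changeLevel_eq_cast_of_dvd ψ hfD (isUnit_iff.2 hx).unit
  · simpa using MulChar.map_nonunit _ (isUnit_iff.not.2 hx)

lemma gaussSum_changeLevel_eq_sum_moebius (hfD : f ∣ D) (ψ : DirichletCharacter R f)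
    (ε : AddChar (ZMod D) R) :
    gaussSum (changeLevel hfD ψ) ε =
      ∑ d ∈ D.divisors, (μ d : R) * ∑ x with d ∣ x.val, ψ x.cast * ε x := by
  simp_rw [gaussSum, changeLevel_eq_sum_moebius, sum_mul, mul_sum, sum_filter]
  rw [sum_comm]
  simp_rw [mul_assoc]

lemma sum_filter_dvd_val_mul_addChar_eq_zero [IsDomain R] (hfD : f ∣ D)
    (ψ : DirichletCharacter R f) {ε : AddChar (ZMod D) R} (hε : ε.IsPrimitive) {d : ℕ}
    (hd : d ∣ D) (hdf : d ≠ D / f) :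
    ∑ x with d ∣ x.val, ψ x.cast * ε x = 0 := by
  by_cases hDdf : D ∣ d * f
  · have hf : 0 < f := Nat.pos_of_dvd_of_pos hfD (NeZero.pos D)
    obtain ⟨r, rfl⟩ := hfD
    rw [Nat.mul_div_cancel_left r hf] at hdf
    obtain ⟨k, rfl⟩ : r ∣ d := Nat.dvd_of_mul_dvd_mul_right hf (by rwa [mul_comm r])
    have hr : 0 < r := Nat.pos_of_mul_pos_left (NeZero.pos (f * r))
    have hkf : k ∣ f := Nat.dvd_of_mul_dvd_mul_left hr (by rwa [mul_comm r f])
    have hk : k ≠ 1 := by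
      rintro rfl
      exact hdf (mul_one r)
    refine sum_eq_zero fun x hx ↦ ?_
    have hkx : k ∣ x.val := (dvd_mul_left k r).trans (mem_filter.1 hx).2
    rw [← ZMod.natCast_val, map_natCast_eq_zero_of_dvd ψ hkf hkx hk, zero_mul]
  · have hεdf : ε (d * f : ℕ) ≠ 1 := by
      rwa [Ne, hε.zmod_char_eq_one_iff, ZMod.natCast_eq_zero_iff]
    simpa only [sum_filter, ite_mul, zero_mul] using
      sum_mul_addChar_eq_zero_of_periodic (periodic_ite_dvd_val hd hfD ψ) hεdf

lemma gaussSum_changeLevel [IsDomain R] [NeZero f] (hfD : f ∣ D) (ψ : DirichletCharacter R f)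
    {ε : AddChar (ZMod D) R} (hε : ε.IsPrimitive) {ε' : AddChar (ZMod f) R}
    (hε' : ∀ b : ℕ, ε' b = ε (D / f * b : ℕ)) :
    gaussSum (changeLevel hfD ψ) ε = μ (D / f) * ψ (D / f : ℕ) * gaussSum ψ ε' := by
  have main_term : ∑ x with D / f ∣ x.val, ψ x.cast * ε x = ψ (D / f : ℕ) * gaussSum ψ ε' := by
    obtain ⟨r, rfl⟩ := hfD
    rw [Nat.mul_div_cancel_left r (NeZero.pos f)] at hε' ⊢
    rw [sum_filter_dvd_val, gaussSum, mul_sum]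
    refine sum_congr rfl fun y _ ↦ ?_
    rw [← hε', ZMod.cast_natCast (dvd_mul_right f r), Nat.cast_mul, map_mul, ZMod.natCast_zmod_val,
      mul_assoc]
  rw [gaussSum_changeLevel_eq_sum_moebius, sum_eq_single_of_mem (D / f)
    (Nat.mem_divisors.2 ⟨Nat.div_dvd_of_dvd hfD, NeZero.ne D⟩), main_term, mul_assoc]
  intro d hd hdf
  rw [sum_filter_dvd_val_mul_addChar_eq_zero hfD ψ hε (Nat.dvd_of_mem_divisors hd) hdf, mul_zero]

end ChangeLevel

lemma conj_e (x : ℝ) : conj (e x) = e (-x) := by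
  rw [e, e, ← Complex.exp_conj]
  simp [Complex.conj_ofNat]

lemma e_intCast_div {N : ℕ} [NeZero N] (j : ℤ) : e (j / N) = ZMod.stdAddChar (j : ZMod N) := by
  rw [ZMod.stdAddChar_coe, e]
  push_cast
  ring_nf

lemma sum_range_mul_e_eq_gaussSum {N : ℕ} [NeZero N] (χ : DirichletCharacter ℂ N) (a : ℤ) :
    ∑ b ∈ range N, χ b * e (a * b / N) = gaussSum χ (ZMod.stdAddChar.mulShift (a : ZMod N)) := by
  rw [gaussSum, ← sum_range_natCast_zmod]
  refine sum_congr rfl fun b _ ↦ ?_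
  have h := e_intCast_div (N := N) (a * b)
  push_cast at h
  rw [h, AddChar.mulShift_apply]

lemma gaussSumOf_eq_gaussSum {N : ℕ} [NeZero N] (ψ : DirichletCharacter ℂ N) :
    gaussSumOf ψ = gaussSum ψ ZMod.stdAddChar := by
  simpa [gaussSumOf] using sum_range_mul_e_eq_gaussSum ψ 1

lemma stdAddChar_natCast_eq_of_dvd {f D : ℕ} [NeZero f] [NeZero D] (hfD : f ∣ D) (b : ℕ) :
    ZMod.stdAddChar (b : ZMod f) = ZMod.stdAddChar ((D / f * b : ℕ) : ZMod D) := by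
  have hf : (f : ℝ) ≠ 0 := NeZero.ne _
  have hD : (D : ℝ) ≠ 0 := NeZero.ne _
  have h := e_intCast_div (N := f) b
  have h' := e_intCast_div (N := D) (D / f * b : ℕ)
  rw [Int.cast_natCast, Int.cast_natCast] at h h'
  rw [← h, ← h', Nat.cast_mul, Nat.cast_div hfD hf]
  field_simp

lemma gaussSum_stdAddChar_eq_gaussSumOf_primitiveCharacter {D : ℕ} [NeZero D]
    (χ : DirichletCharacter ℂ D) :
    gaussSum χ ZMod.stdAddChar =
      μ (D / χ.conductor) * χ.primitiveCharacter (D / χ.conductor : ℕ) *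
        gaussSumOf χ.primitiveCharacter := by
  have hfD := χ.conductor_dvd_level
  have : NeZero χ.conductor := ⟨ne_zero_of_dvd_ne_zero (NeZero.ne D) hfD⟩
  conv_lhs => rw [← χ.changeLevel_primitiveCharacter]
  rw [gaussSumOf_eq_gaussSum]
  exact gaussSum_changeLevel hfD _ (ZMod.isPrimitive_stdAddChar D)
    (stdAddChar_natCast_eq_of_dvd hfD)

/-- For `(a, D) = 1` and a Dirichlet character `χ (mod D)`,
`∑_{b=0}^{D-1} conj(χ(b)) e(-ab/D) = μ(D/f_χ) χ*(a) conj(χ*(D/f_χ)) conj(τ(χ*))`. -/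
theorem sum_conj_char_times_e_eq
    (D : ℕ) (hD : 0 < D) (a : ℤ) (ha : a.gcd D = 1) (χ : DirichletCharacter ℂ D) :
    ∑ b ∈ Finset.range D, (starRingEnd ℂ) (χ (b : ZMod D)) * e (-((a : ℝ) * b) / D) =
      (ArithmeticFunction.moebius (D / χ.conductor) : ℂ) *
        χ.primitiveCharacter ((a : ZMod χ.conductor)) *
        (starRingEnd ℂ) (χ.primitiveCharacter (((D / χ.conductor : ℕ) : ZMod χ.conductor))) *
        (starRingEnd ℂ) (gaussSumOf χ.primitiveCharacter) := by
  have : NeZero D := ⟨hD.ne'⟩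
  have a_coprime : IsCoprime a D := Int.isCoprime_iff_gcd_eq_one.2 ha
  have a_isUnit : IsUnit (a : ZMod D) := (ZMod.coe_int_isUnit_iff_isCoprime a D).2 a_coprime.symm
  calc
    _ = conj (∑ b ∈ range D, χ b * e (a * b / D)) := by simp [conj_e, neg_div]
    _ = conj (gaussSum χ (ZMod.stdAddChar.mulShift (a : ZMod D))) := by
      rw [sum_range_mul_e_eq_gaussSum]
    _ = conj (χ⁻¹ a * gaussSum χ ZMod.stdAddChar) := by
      simpa using congrArg conj (gaussSum_mulShift_eq χ ZMod.stdAddChar a_isUnit.unit)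
    _ = χ.primitiveCharacter a * conj (gaussSum χ ZMod.stdAddChar) := by
      rw [map_mul, starRingEnd_apply, MulChar.star_apply', inv_inv,
        χ.primitiveCharacter_apply_of_isCoprime a_coprime]
    _ = _ := by
      rw [gaussSum_stdAddChar_eq_gaussSumOf_primitiveCharacter]
      simp only [map_mul, map_intCast]
      ring
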